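/- Consider any (K,N,Q,T)-scheme and any subset C ⊆ Fin K of servers. For a pair (q,n) ∈ Fin Q × Fin N let s(q,n) = |{k : n ∈ M k}| and d(q,n) = |{k : q ∈ W k and n ∉ M k}|. Then ∑_{k∈C} ℓ k ≥ T · ∑ d(q,n)/(s(q,n)+d(q,n)−1), where the sum ranges over all pairs (q,n) such that d(q,n) ≥ 1, every server k with n ∈ M k lies in C, and every server k with q ∈ W k and n ∉ M k lies in C. -/

import Mathlib

/-!
The bound is an entropy argument. Let the table `v` of intermediate values be uniformly random. A
random variable only matters through the partition of the sample space into its level sets, so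
variables are encoded as setoids: a pair of variables is an infimum `⊓`, and `r ≤ s` says that `r`
determines `s`. Entropy is submodular (`entropy_submodular`, from `log x ≤ x - 1`).

For a set `C` of servers let `X_C` be the messages of `C`, and let `Y` be all the values that are
mapped or reduced outside `C` (the pairs in `known S C`). The claim, proved by induction on `C`, is
`H(X_C | Y) ≥ T ∑ d / (s + d - 1)`, summed over the pairs that are not known outside `C`.
* Since `X_k` is a function of the values `V_k` mapped by server `k`, submodularity gives
  `H(X_C | V_k, Y) + H(X_k | Y) ≤ H(X_C | Y)`. Summing over `k ∈ C` and using subadditivity,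
  `∑ k ∈ C, H(X_C | V_k, Y) ≤ (|C| - 1) H(X_C | Y)` (`sum_cond_le`).
* Given `V_k` and `Y`, the messages `X_C` determine all messages, hence by decodability the rows
  reduced by `k`. The chain rule thus splits `H(X_C | V_k, Y)` into `T` times the number of unknown
  values that `k` needs, plus the same conditional entropy for `C \ {k}` (`cond_eq`).
* Counting, for each unknown pair, the servers that map it, need it, or do neither shows
  that the induction hypotheses add up to exactly `|C| - 1` times the bound
  (`sum_bound_identity`).

Finally `H(X_C | Y) ≤ H(X_C) ≤ ∑ k ∈ C, ℓ k`. Entropies are in bits above; the lemmas use natural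
logarithms, hence their factors `log 2`.
-/

/-- A (K,N,Q,T)-scheme: K servers, N input files, Q output functions,
T-bit intermediate values.  `M k` is the set of files mapped by server `k`,
`W k` the set of functions reduced by server `k`, `len k` the length (in bits)
of server `k`'s message; `enc` produces the message of each server from its
locally computed intermediate values, and `dec` recovers, for each server `k`
and each `q ∈ W k`, the full row of intermediate values of function `q`
from all messages and the local values, correctly for every realization `v`. -/
structure Scheme (K N Q T : ℕ) where
  M : Fin K → Finset (Fin N)
  W : Fin K → Finset (Fin Q)
  cover : ∀ n : Fin N, ∃ k : Fin K, n ∈ M k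
  len : Fin K → ℕ
  enc : (k : Fin K) → (Fin Q → {n : Fin N // n ∈ M k} → (Fin T → Bool)) →
    (Fin (len k) → Bool)
  dec : (k : Fin K) → (q : Fin Q) → q ∈ W k →
    ((j : Fin K) → (Fin (len j) → Bool)) →
    (Fin Q → {n : Fin N // n ∈ M k} → (Fin T → Bool)) →
    (Fin N → Fin T → Bool)
  correct : ∀ (v : Fin Q × Fin N → Fin T → Bool) (k : Fin K) (q : Fin Q) (hq : q ∈ W k),
    dec k q hq (fun j => enc j (fun q' n => v (q', n.1))) (fun q' n => v (q', n.1)) =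
      fun n => v (q, n)

/-- Peak computation load `p = (max_k |M k|)/N`. -/
noncomputable def peakLoad {K N Q T : ℕ} (S : Scheme K N Q T) : ℝ :=
  ((Finset.univ.sup (fun k : Fin K => (S.M k).card) : ℕ) : ℝ) / N

/-- Communication load `L = (∑_k ℓ k)/(Q·N·T)`. -/
noncomputable def commLoad {K N Q T : ℕ} (S : Scheme K N Q T) : ℝ :=
  (∑ k : Fin K, (S.len k : ℝ)) / ((Q : ℝ) * N * T)

/-- Singleton Reduce assignment: the `W k` are pairwise disjoint, cover `Fin Q`,
and each server reduces at most one function. -/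
def SingletonReduce {K N Q T : ℕ} (S : Scheme K N Q T) : Prop :=
  (∀ j k : Fin K, j ≠ k → Disjoint (S.W j) (S.W k)) ∧
  (∀ q : Fin Q, ∃ k : Fin K, q ∈ S.W k) ∧
  (∀ k : Fin K, (S.W k).card ≤ 1)

namespace SubsetBits

open Finset

/-! ### Entropy of partitions of a finite uniform space -/

section Entropy

variable {Ω : Type*} [Fintype Ω]

open Classical in
/-- The size of the class of `ω` under the equivalence relation `r`. -/
noncomputable def cnt (r : Setoid Ω) (ω : Ω) : ℕ := #{w | r w ω}

/-- Shannon entropy, in nats, of the partition `r` under the uniform measure: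
the mean of `log (|Ω| / |class of ω|)`. -/
noncomputable def entropy (r : Setoid Ω) : ℝ :=
  (∑ ω, (Real.log (Fintype.card Ω) - Real.log (cnt r ω))) / Fintype.card Ω

lemma cnt_pos (r : Setoid Ω) (ω : Ω) : 0 < cnt r ω := by
  classical
  exact Finset.card_pos.2 ⟨ω, by simp⟩

lemma cnt_congr (r : Setoid Ω) {ω ω' : Ω} (h : r ω ω') : cnt r ω = cnt r ω' := by
  classical
  unfold cnt
  congr 1
  ext w
  simp only [mem_filter, mem_univ, true_and]
  exact ⟨fun hw => r.trans hw h, fun hw => r.trans hw (r.symm h)⟩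

lemma cnt_mono {r s : Setoid Ω} (h : r ≤ s) (ω : Ω) : cnt r ω ≤ cnt s ω := by
  classical
  refine Finset.card_le_card fun w hw => ?_
  simp only [mem_filter, mem_univ, true_and] at hw ⊢
  exact h hw

lemma entropy_anti {r s : Setoid Ω} (h : r ≤ s) : entropy s ≤ entropy r := by
  unfold entropy
  gcongr with ω
  · exact_mod_cast cnt_pos r ω
  · exact cnt_mono h ω

lemma entropy_top : entropy (⊤ : Setoid Ω) = 0 := by
  classical
  have : ∀ ω : Ω, cnt (⊤ : Setoid Ω) ω = Fintype.card Ω := by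
    intro ω
    unfold cnt
    rw [← Finset.card_univ]
    congr 1
    ext w
    simp [Setoid.top_def]
  simp [entropy, this]

open Classical in
/-- A nonempty intersection of an `r`-class and an `s`-class is a single `r ⊓ s`-class, and it lies
in one `t`-class. -/
lemma inner_sum_le {r s t : Setoid Ω} (hr : r ≤ t) (hs : s ≤ t) (u v : Ω) :
    ∑ ω with (r u ω ∧ s v ω), (1 : ℝ) / (cnt (r ⊓ s) ω * cnt t ω) ≤
      if t v u then (1 : ℝ) / cnt t u else 0 := by
  rcases Finset.eq_empty_or_nonempty (univ.filter fun ω => r u ω ∧ s v ω) with h | ⟨w, hw⟩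
  · rw [h, sum_empty]
    split_ifs <;> positivity
  · simp only [mem_filter, mem_univ, true_and] at hw
    have huv : t v u := t.trans (hs hw.2) (t.symm (hr hw.1))
    rw [if_pos huv]
    have hcard : #{ω | r u ω ∧ s v ω} = cnt (r ⊓ s) w := by
      unfold cnt
      congr 1
      ext x
      simp only [mem_filter, mem_univ, true_and]
      exact ⟨fun hx => ⟨r.trans (r.symm hx.1) hw.1, s.trans (s.symm hx.2) hw.2⟩,
        fun hx => ⟨r.trans hw.1 (r.symm hx.1), s.trans hw.2 (s.symm hx.2)⟩⟩
    have hconst : ∀ ω ∈ univ.filter (fun ω => r u ω ∧ s v ω),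
        (1 : ℝ) / (cnt (r ⊓ s) ω * cnt t ω) = 1 / (cnt (r ⊓ s) w * cnt t u) := by
      intro x hx
      simp only [mem_filter, mem_univ, true_and] at hx
      have h1 : (r ⊓ s) x w :=
        ⟨r.trans (r.symm hx.1) hw.1, s.trans (s.symm hx.2) hw.2⟩
      rw [cnt_congr _ h1, cnt_congr t (t.symm (hr hx.1))]
    rw [sum_congr rfl hconst, sum_const, hcard, nsmul_eq_mul]
    have := cnt_pos (r ⊓ s) w
    have := cnt_pos t u
    apply le_of_eq
    field_simp

lemma ratio_sum_le {r s t : Setoid Ω} (hr : r ≤ t) (hs : s ≤ t) :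
    ∑ ω, ((cnt r ω : ℝ) * cnt s ω) / (cnt (r ⊓ s) ω * cnt t ω) ≤ Fintype.card Ω := by
  classical
  calc ∑ ω, ((cnt r ω : ℝ) * cnt s ω) / (cnt (r ⊓ s) ω * cnt t ω)
      = ∑ ω, ∑ u, ∑ v, if r u ω ∧ s v ω then (1 : ℝ) / (cnt (r ⊓ s) ω * cnt t ω) else 0 := by
        refine sum_congr rfl fun ω _ => ?_
        have h1 : (cnt r ω : ℝ) = ∑ u, if r u ω then 1 else 0 := by simp [cnt]
        have h2 : (cnt s ω : ℝ) = ∑ v, if s v ω then 1 else 0 := by simp [cnt]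
        rw [h1, h2, sum_mul_sum, sum_div]
        refine sum_congr rfl fun u _ => ?_
        rw [sum_div]
        refine sum_congr rfl fun v _ => ?_
        by_cases hu : r u ω <;> by_cases hv : s v ω <;> simp [hu, hv]
    _ = ∑ u, ∑ v, ∑ ω with (r u ω ∧ s v ω), (1 : ℝ) / (cnt (r ⊓ s) ω * cnt t ω) := by
        rw [sum_comm]
        refine sum_congr rfl fun u _ => ?_
        rw [sum_comm]
        refine sum_congr rfl fun v _ => ?_
        rw [sum_filter]
    _ ≤ ∑ u, ∑ v, if t v u then (1 : ℝ) / cnt t u else 0 := by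
        gcongr with u _ v _
        exact inner_sum_le hr hs u v
    _ = ∑ u : Ω, (1 : ℝ) := by
        refine sum_congr rfl fun u _ => ?_
        have h0 := cnt_pos t u
        rw [← sum_filter, sum_const, nsmul_eq_mul]
        change (cnt t u : ℝ) * _ = 1
        field_simp
    _ = Fintype.card Ω := by simp

/-- Submodularity of entropy, with both partitions refining the one conditioned on. -/
lemma entropy_submodular_of_le {r s t : Setoid Ω} (hr : r ≤ t) (hs : s ≤ t) :
    entropy (r ⊓ s) + entropy t ≤ entropy r + entropy s := by
  unfold entropy
  rw [← add_div, ← add_div]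
  gcongr ?_ / _
  rw [← sum_add_distrib, ← sum_add_distrib, ← sub_nonpos, ← sum_sub_distrib]
  calc _ ≤ ∑ ω, (((cnt r ω : ℝ) * cnt s ω) / (cnt (r ⊓ s) ω * cnt t ω) - 1) := by
        refine sum_le_sum fun ω _ => ?_
        have a1 : (0 : ℝ) < cnt r ω := by exact_mod_cast cnt_pos r ω
        have a2 : (0 : ℝ) < cnt s ω := by exact_mod_cast cnt_pos s ω
        have a3 : (0 : ℝ) < cnt (r ⊓ s) ω := by exact_mod_cast cnt_pos (r ⊓ s) ω
        have a4 : (0 : ℝ) < cnt t ω := by exact_mod_cast cnt_pos t ω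
        have := Real.log_le_sub_one_of_pos (div_pos (mul_pos a1 a2) (mul_pos a3 a4))
        rw [Real.log_div (by positivity) (by positivity), Real.log_mul a1.ne' a2.ne',
          Real.log_mul a3.ne' a4.ne'] at this
        linarith
    _ ≤ 0 := by
        rw [sum_sub_distrib]
        have := ratio_sum_le hr hs
        simp only [sum_const, card_univ, nsmul_eq_mul, mul_one]
        linarith

lemma entropy_submodular (r s t : Setoid Ω) :
    entropy (r ⊓ s ⊓ t) + entropy t ≤ entropy (r ⊓ t) + entropy (s ⊓ t) := by
  have h := entropy_submodular_of_le (r := r ⊓ t) (s := s ⊓ t) (t := t) inf_le_right inf_le_right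
  rwa [← inf_inf_distrib_right] at h

lemma cond_le_entropy (r t : Setoid Ω) : entropy (r ⊓ t) - entropy t ≤ entropy r := by
  have h := entropy_submodular r t ⊤
  simp only [inf_top_eq, entropy_top, add_zero] at h
  linarith

/-- Entropy is at most the logarithm of the number of values. -/
lemma entropy_ker_le [Nonempty Ω] {β : Type*} [Fintype β] (f : Ω → β) :
    entropy (Setoid.ker f) ≤ Real.log (Fintype.card β) := by
  classical
  have : Nonempty β := ⟨f (Classical.arbitrary Ω)⟩
  have hO : (0 : ℝ) < Fintype.card Ω := by exact_mod_cast Fintype.card_pos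
  have hB : (0 : ℝ) < Fintype.card β := by exact_mod_cast Fintype.card_pos
  have hc : ∀ ω, cnt (Setoid.ker f) ω = #{w | f w = f ω} := by
    intro ω
    unfold cnt
    congr 1
  have key : ∑ ω, (1 : ℝ) / cnt (Setoid.ker f) ω ≤ Fintype.card β := by
    rw [← Finset.sum_fiberwise univ f]
    calc _ ≤ ∑ b : β, (1 : ℝ) := by
          refine sum_le_sum fun b _ => ?_
          have : ∀ ω ∈ univ.filter (fun ω => f ω = b),
              (1 : ℝ) / cnt (Setoid.ker f) ω = 1 / #{w | f w = b} := by
            intro ω hω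
            simp only [mem_filter, mem_univ, true_and] at hω
            rw [hc, hω]
          rw [sum_congr rfl this, sum_const, nsmul_eq_mul, mul_one_div]
          exact div_self_le_one _
      _ = _ := by simp
  unfold entropy
  rw [div_le_iff₀ hO, ← sub_nonpos]
  calc _ = ∑ ω, (Real.log (Fintype.card Ω) - Real.log (cnt (Setoid.ker f) ω)
            - Real.log (Fintype.card β)) := by
        rw [sum_sub_distrib]
        simp [mul_comm]
    _ ≤ ∑ ω, ((Fintype.card Ω / Fintype.card β : ℝ) * (1 / cnt (Setoid.ker f) ω) - 1) := by
        refine sum_le_sum fun ω _ => ?_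
        have a1 : (0 : ℝ) < cnt (Setoid.ker f) ω := by exact_mod_cast cnt_pos _ ω
        have := Real.log_le_sub_one_of_pos (div_pos (div_pos hO hB) a1)
        rw [Real.log_div (by positivity) (by positivity), Real.log_div hO.ne' hB.ne'] at this
        rw [mul_one_div]
        linarith
    _ ≤ 0 := by
        rw [sum_sub_distrib, ← mul_sum]
        simp only [sum_const, card_univ, nsmul_eq_mul, mul_one]
        have : (Fintype.card Ω / Fintype.card β : ℝ) * ∑ ω, (1 : ℝ) / cnt (Setoid.ker f) ω
            ≤ (Fintype.card Ω / Fintype.card β : ℝ) * Fintype.card β := by gcongr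
        rw [div_mul_cancel₀ _ hB.ne'] at this
        linarith

/-- Conditional subadditivity: `H((x i)_{i ∈ C} | e) ≤ ∑ i ∈ C, H(x i | e)`. -/
lemma cond_subadd {ι : Type*} (x : ι → Setoid Ω) (e : Setoid Ω) (C : Finset ι) :
    entropy (C.inf x ⊓ e) - entropy e ≤ ∑ i ∈ C, (entropy (x i ⊓ e) - entropy e) := by
  classical
  induction C using Finset.induction_on with
  | empty => simp
  | insert a s ha ih =>
    rw [Finset.inf_insert, sum_insert ha]
    have := entropy_submodular (x a) (s.inf x) e
    linarith

/-- If `x k` is determined by `m k`, the entropies of all of `x` conditioned on `e` and one `m k`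
add up to at most `|C| - 1` times the entropy conditioned on `e` alone. -/
lemma sum_cond_le {ι : Type*} (x m : ι → Setoid Ω) (hm : ∀ i, m i ≤ x i) (e : Setoid Ω)
    (C : Finset ι) :
    ∑ k ∈ C, (entropy (C.inf x ⊓ (m k ⊓ e)) - entropy (m k ⊓ e)) ≤
      (#C - 1 : ℝ) * (entropy (C.inf x ⊓ e) - entropy e) := by
  have h1 : ∀ k ∈ C, entropy (C.inf x ⊓ (m k ⊓ e)) - entropy (m k ⊓ e) ≤
      (entropy (C.inf x ⊓ e) - entropy e) - (entropy (x k ⊓ e) - entropy e) := by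
    intro k hk
    have h := entropy_submodular (C.inf x) (m k) (x k ⊓ e)
    have hx : C.inf x ≤ x k := Finset.inf_le hk
    have e1 : C.inf x ⊓ m k ⊓ (x k ⊓ e) = C.inf x ⊓ (m k ⊓ e) := by
      rw [inf_assoc, ← inf_assoc (m k), inf_eq_left.2 (hm k)]
    have e2 : C.inf x ⊓ (x k ⊓ e) = C.inf x ⊓ e := by
      rw [← inf_assoc, inf_eq_left.2 hx]
    have e3 : m k ⊓ (x k ⊓ e) = m k ⊓ e := by
      rw [← inf_assoc, inf_eq_left.2 (hm k)]
    rw [e1, e2, e3] at h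
    linarith
  have h2 := sum_le_sum h1
  rw [sum_sub_distrib (f := fun _ => entropy (C.inf x ⊓ e) - entropy e), sum_const,
    nsmul_eq_mul] at h2
  have := cond_subadd x e C
  linarith

end Entropy

/-! ### Uniformly random tables of values -/

section Tables

variable {P : Type*} {A : Type*}

/-- Two tables are equivalent when they agree on `B`; this is the variable `(v p)_{p ∈ B}`. -/
def agree (A : Type*) (B : Finset P) : Setoid (P → A) where
  r v w := ∀ p ∈ B, v p = w p
  iseqv := ⟨fun _ _ _ => rfl, fun h p hp => (h p hp).symm,
    fun h h' p hp => (h p hp).trans (h' p hp)⟩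

lemma agree_union [DecidableEq P] (B B' : Finset P) :
    agree A (B ∪ B') = agree A B ⊓ agree A B' := by
  ext v w
  constructor
  · intro h
    exact ⟨fun p hp => h p (mem_union_left _ hp), fun p hp => h p (mem_union_right _ hp)⟩
  · rintro ⟨h, h'⟩ p hp
    rcases mem_union.1 hp with hp | hp
    exacts [h p hp, h' p hp]

lemma entropy_agree [Fintype P] [DecidableEq P] [Fintype A] [Nonempty A] (B : Finset P) :
    entropy (agree A B) = #B * Real.log (Fintype.card A) := by
  classical
  have hA : (0 : ℝ) < Fintype.card A := by exact_mod_cast Fintype.card_pos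
  have hc : ∀ v : P → A, cnt (agree A B) v = Fintype.card A ^ #Bᶜ := by
    intro v
    have : (univ.filter fun w : P → A => agree A B w v) =
        Fintype.piFinset fun p => if p ∈ B then {v p} else univ := by
      ext w
      simp only [mem_filter, mem_univ, true_and, Fintype.mem_piFinset]
      refine forall_congr' fun p => ?_
      by_cases hp : p ∈ B <;> simp [hp]
    unfold cnt
    rw [this, Fintype.card_piFinset, ← Finset.prod_mul_prod_compl B]
    rw [Finset.prod_congr rfl (g := fun _ => 1) (by intro p hp; simp [hp]),
      Finset.prod_congr (s₁ := Bᶜ) rfl (g := fun _ => Fintype.card A)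
        (by intro p hp; simp [Finset.mem_compl.1 hp])]
    simp
  have hO : (Fintype.card (P → A) : ℝ) ≠ 0 := by
    exact_mod_cast Fintype.card_ne_zero
  unfold entropy
  simp only [hc, sum_const, card_univ, nsmul_eq_mul]
  rw [mul_div_cancel_left₀ _ hO, Fintype.card_fun, ← Finset.card_add_card_compl B]
  push_cast
  rw [Real.log_pow, Real.log_pow]
  push_cast
  ring

end Tables

/-! ### The scheme -/

section Main

variable {K N Q T : ℕ} (S : Scheme K N Q T)

/-- The message of server `k` as a function of the full table. -/
def msg (k : Fin K) (v : Fin Q × Fin N → Fin T → Bool) : Fin (S.len k) → Bool :=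
  S.enc k fun q n => v (q, n.1)

/-- The pairs mapped by server `k`. -/
def mapped (k : Fin K) : Finset (Fin Q × Fin N) := {p | p.2 ∈ S.M k}

/-- The pairs reduced by server `k`. -/
def reduced (k : Fin K) : Finset (Fin Q × Fin N) := {p | p.1 ∈ S.W k}

/-- The pairs mapped or reduced by some server outside `C`. -/
def known (C : Finset (Fin K)) : Finset (Fin Q × Fin N) :=
  Cᶜ.biUnion fun k => mapped S k ∪ reduced S k

/-- The servers that map the file of `p`. -/
def havers (p : Fin Q × Fin N) : Finset (Fin K) := {k | p.2 ∈ S.M k}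

/-- The servers that need, but do not map, the value at `p`. -/
def needers (p : Fin Q × Fin N) : Finset (Fin K) := {k | p.1 ∈ S.W k ∧ p.2 ∉ S.M k}

/-- The contribution `d / (s + d - 1)` of a pair. It vanishes for `d = 0`, also when the denominator
is `0`. -/
noncomputable def weight (p : Fin Q × Fin N) : ℝ :=
  (#(needers S p) : ℝ) / (#(havers S p) + #(needers S p) - 1)

/-- The messages of server `k`, as a partition of the space of tables. -/
def msgRel (k : Fin K) : Setoid (Fin Q × Fin N → Fin T → Bool) := Setoid.ker (msg S k)

/-- The conditional entropy of the messages of `C` given all values known outside `C`. -/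
noncomputable def condEnt (C : Finset (Fin K)) : ℝ :=
  entropy (C.inf (msgRel S) ⊓ agree (Fin T → Bool) (known S C)) -
    entropy (agree (Fin T → Bool) (known S C))

lemma agree_mapped_le (k : Fin K) : agree (Fin T → Bool) (mapped S k) ≤ msgRel S k := by
  intro v w h
  change S.enc k _ = S.enc k _
  congr 1
  funext q n
  exact h (q, n.1) (by simp [mapped, n.2])

lemma inf_msgRel {C : Finset (Fin K)} {v w : Fin Q × Fin N → Fin T → Bool} :
    (C.inf (msgRel S)) v w ↔ ∀ k ∈ C, msg S k v = msg S k w := by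
  induction C using Finset.induction_on with
  | empty =>
    rw [Finset.inf_empty]
    simp [Setoid.top_def]
  | insert a s ha ih =>
    rw [Finset.inf_insert, forall_mem_insert, ← ih]
    rfl

lemma known_erase {C : Finset (Fin K)} {k : Fin K} :
    known S (C.erase k) = (mapped S k ∪ known S C) ∪ reduced S k := by
  ext p
  simp only [known, mem_biUnion, mem_union, mem_compl, mem_erase, not_and_or, not_not]
  constructor
  · rintro ⟨j, rfl | hj, h⟩
    · tauto
    · exact Or.inl (Or.inr ⟨j, hj, h⟩)
  · rintro ((h | ⟨j, hj, h⟩) | h)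
    · exact ⟨k, Or.inl rfl, Or.inl h⟩
    · exact ⟨j, Or.inr hj, h⟩
    · exact ⟨k, Or.inl rfl, Or.inr h⟩

/-- The messages of `C`, the values mapped by `k` and those known outside `C` determine every
message, hence the rows reduced by `k`. -/
lemma decode (C : Finset (Fin K)) (k : Fin K) :
    C.inf (msgRel S) ⊓ agree (Fin T → Bool) (mapped S k ∪ known S C) ≤
      agree (Fin T → Bool) (reduced S k) := by
  rintro v w ⟨hC, hB⟩
  have hC' := (inf_msgRel S).1 hC
  have hmsg : ∀ j, msg S j v = msg S j w := by
    intro j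
    by_cases hj : j ∈ C
    · exact hC' j hj
    · refine agree_mapped_le S j fun p hp => hB p ?_
      exact mem_union_right _ (mem_biUnion.2 ⟨j, mem_compl.2 hj, mem_union_left _ hp⟩)
  have hloc : (fun (q' : Fin Q) (n : {n : Fin N // n ∈ S.M k}) => v (q', n.1)) =
      fun q' n => w (q', n.1) := by
    funext q n
    exact hB (q, n.1) (mem_union_left _ (by simp [mapped, n.2]))
  rintro ⟨q, n⟩ hp
  have hq : q ∈ S.W k := by simpa [reduced] using hp
  have h1 := S.correct v k q hq
  have h2 := S.correct w k q hq
  have hm : (fun j => S.enc j fun q' n => v (q', n.1)) =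
      fun j => S.enc j fun q' n => w (q', n.1) := funext hmsg
  rw [hm, hloc, h2] at h1
  exact (congrFun h1 n).symm

/-- Chain rule: given the values mapped by `k`, the messages of `C` reveal the unknown values needed
by `k`, and then carry the conditional entropy of `C.erase k`. -/
lemma cond_eq {C : Finset (Fin K)} {k : Fin K} (hk : k ∈ C) :
    entropy (C.inf (msgRel S) ⊓ (agree (Fin T → Bool) (mapped S k) ⊓
        agree (Fin T → Bool) (known S C))) -
      entropy (agree (Fin T → Bool) (mapped S k) ⊓ agree (Fin T → Bool) (known S C)) =
    T * Real.log 2 * #{p ∈ (known S C)ᶜ | k ∈ needers S p} + condEnt S (C.erase k) := by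
  have e1 : C.inf (msgRel S) ⊓ agree (Fin T → Bool) (mapped S k ∪ known S C) =
      (C.erase k).inf (msgRel S) ⊓ agree (Fin T → Bool) (known S (C.erase k)) := by
    conv_lhs => rw [← inf_eq_left.2 (decode S C k), inf_assoc, ← agree_union, ← known_erase,
      ← insert_erase hk, Finset.inf_insert, inf_comm (msgRel S k), inf_assoc]
    have : agree (Fin T → Bool) (known S (C.erase k)) ≤ msgRel S k := by
      rw [known_erase, agree_union, agree_union]
      exact inf_le_left.trans (inf_le_left.trans (agree_mapped_le S k))
    rw [erase_insert (notMem_erase k C), inf_eq_right.2 this]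
  have hcard : #(known S (C.erase k)) =
      #(mapped S k ∪ known S C) + #{p ∈ (known S C)ᶜ | k ∈ needers S p} := by
    rw [known_erase, ← card_union_of_disjoint]
    · congr 1
      ext p
      simp only [mem_union, mem_filter, mem_compl, needers, mapped, reduced, mem_univ, true_and]
      tauto
    · rw [disjoint_left]
      intro p
      simp only [mem_union, mem_filter, mem_compl, needers, mapped, mem_univ, true_and]
      tauto
  have hlog : Real.log (Fintype.card (Fin T → Bool)) = T * Real.log 2 := by
    simp
  rw [condEnt, ← agree_union, e1, entropy_agree, entropy_agree, hlog, hcard]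
  push_cast
  ring

lemma havers_nonempty (p : Fin Q × Fin N) : (havers S p).Nonempty := by
  obtain ⟨k, hk⟩ := S.cover p.2
  exact ⟨k, by simp [havers, hk]⟩

lemma disjoint_havers_needers (p : Fin Q × Fin N) : Disjoint (havers S p) (needers S p) := by
  rw [disjoint_left]
  intro k
  simp only [havers, needers, mem_filter, mem_univ, true_and]
  tauto

lemma mem_compl_known {C : Finset (Fin K)} {p : Fin Q × Fin N} :
    p ∈ (known S C)ᶜ ↔ havers S p ∪ needers S p ⊆ C := by
  simp only [known, mem_compl, mem_biUnion, mem_union, mapped, reduced, havers, needers,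
    mem_filter, mem_univ, true_and, subset_iff, not_exists, not_and]
  refine forall_congr' fun k => ?_
  tauto

lemma weight_mul (p : Fin Q × Fin N) :
    weight S p * (#(havers S p) + #(needers S p) - 1) = #(needers S p) := by
  unfold weight
  rcases Nat.eq_zero_or_pos #(needers S p) with h | h
  · simp [h]
  · have h1 : (1 : ℝ) ≤ #(needers S p) := by exact_mod_cast h
    have h2 : (1 : ℝ) ≤ #(havers S p) := by exact_mod_cast (havers_nonempty S p).card_pos
    exact div_mul_cancel₀ _ (by linarith)

/-- A pair unknown outside `C` stays unknown outside `C.erase k` for the `|C| - s - d` servers `k`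
that neither map nor need it, and is needed by `d` servers; and
`d + (|C| - s - d) f = (|C| - 1) f` for `f = d / (s + d - 1)`. -/
lemma sum_bound_identity (C : Finset (Fin K)) :
    ∑ k ∈ C, ((#{p ∈ (known S C)ᶜ | k ∈ needers S p} : ℝ) +
        ∑ p ∈ (known S (C.erase k))ᶜ, weight S p) =
      (#C - 1 : ℝ) * ∑ p ∈ (known S C)ᶜ, weight S p := by
  have hsub : ∀ k ∈ C, (known S (C.erase k))ᶜ =
      {p ∈ (known S C)ᶜ | k ∉ havers S p ∪ needers S p} := by
    intro k _
    ext p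
    rw [mem_filter, mem_compl_known, mem_compl_known, subset_erase]
  have h1 : ∀ k ∈ C, ((#{p ∈ (known S C)ᶜ | k ∈ needers S p} : ℝ) +
        ∑ p ∈ (known S (C.erase k))ᶜ, weight S p) =
      ∑ p ∈ (known S C)ᶜ, ((if k ∈ needers S p then 1 else 0) +
        if k ∉ havers S p ∪ needers S p then weight S p else 0) := by
    intro k hk
    rw [hsub k hk, sum_add_distrib, sum_filter]
    simp
  rw [sum_congr rfl h1, sum_comm, mul_sum]
  refine sum_congr rfl fun p hp => ?_
  have hp' := (mem_compl_known S).1 hp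
  have hd : needers S p ⊆ C := subset_union_right.trans hp'
  have hc1 : (∑ k ∈ C, if k ∈ needers S p then (1 : ℝ) else 0) = #(needers S p) := by
    rw [← sum_filter, filter_mem_eq_inter, inter_eq_right.2 hd]
    simp
  have hc2 : (∑ k ∈ C, if k ∉ havers S p ∪ needers S p then weight S p else 0) =
      (#C - (#(havers S p) + #(needers S p)) : ℝ) * weight S p := by
    rw [← sum_filter, sum_const, nsmul_eq_mul, filter_notMem_eq_sdiff,
      cast_card_sdiff hp', card_union_of_disjoint (disjoint_havers_needers S p)]
    push_cast
    ring
  rw [sum_add_distrib, hc1, hc2]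
  linear_combination -weight_mul S p

lemma condEnt_nonneg (C : Finset (Fin K)) : 0 ≤ condEnt S C :=
  sub_nonneg.2 (entropy_anti inf_le_right)

/-- With at most one server nobody can be missing a value that is unknown outside `C`. -/
lemma sum_weight_of_card_le_one {C : Finset (Fin K)} (hC : #C ≤ 1) :
    ∑ p ∈ (known S C)ᶜ, weight S p = 0 := by
  refine sum_eq_zero fun p hp => ?_
  have h1 := card_le_card ((mem_compl_known S).1 hp)
  rw [card_union_of_disjoint (disjoint_havers_needers S p)] at h1
  have h2 := (havers_nonempty S p).card_pos
  have h3 : #(needers S p) = 0 := by omega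
  simp [weight, h3]

/-- The entropy bound, by induction on `C`: divide the sum over `k ∈ C` of the bounds for
`C.erase k` by `|C| - 1`. -/
theorem condEnt_ge (C : Finset (Fin K)) :
    T * Real.log 2 * ∑ p ∈ (known S C)ᶜ, weight S p ≤ condEnt S C := by
  induction C using Finset.strongInduction with
  | H C ih =>
    rcases le_or_gt #C 1 with hC | hC
    · rw [sum_weight_of_card_le_one S hC, mul_zero]
      exact condEnt_nonneg S C
    · have hpos : (0 : ℝ) < #C - 1 := by
        have : (1 : ℝ) < #C := by exact_mod_cast hC
        linarith
      refine le_of_mul_le_mul_left ?_ hpos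
      refine le_trans ?_ (sum_cond_le (msgRel S) (fun k => agree (Fin T → Bool) (mapped S k))
        (agree_mapped_le S) (agree (Fin T → Bool) (known S C)) C)
      rw [mul_left_comm, ← sum_bound_identity, mul_sum]
      refine sum_le_sum fun k hk => ?_
      rw [cond_eq S hk, mul_add]
      gcongr
      exact ih _ (erase_ssubset hk)

lemma condEnt_le (C : Finset (Fin K)) : condEnt S C ≤ (∑ k ∈ C, (S.len k : ℝ)) * Real.log 2 := by
  have h1 := cond_le_entropy (C.inf (msgRel S)) (agree (Fin T → Bool) (known S C))
  have h2 : C.inf (msgRel S) =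
      Setoid.ker (fun v (k : C) => msg S k.1 v) := by
    ext v w
    rw [inf_msgRel, Setoid.ker_def, funext_iff]
    simp
  have h3 := entropy_ker_le (fun v (k : C) => msg S k.1 v)
  rw [← h2] at h3
  refine h1.trans (h3.trans (le_of_eq ?_))
  simp only [Fintype.card_pi, Fintype.card_bool, prod_const, card_univ, Fintype.card_fin]
  rw [prod_coe_sort C (fun k => 2 ^ S.len k), prod_pow_eq_pow_sum]
  push_cast
  rw [Real.log_pow]
  push_cast
  rfl

end Main

end SubsetBits

/-- cut-set style converse bound for any subset `C` of servers.
For a pair `(q,n)`, `s(q,n)` is the number of servers mapping file `n` and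
`d(q,n)` is the number of servers needing (but not having) the value `(q,n)`. -/
theorem subset_bits_lower_bound (K N Q T : ℕ) (hK : 0 < K) (hN : 0 < N) (hQ : 0 < Q)
    (hT : 0 < T) (S : Scheme K N Q T) (C : Finset (Fin K)) :
    (∑ k ∈ C, (S.len k : ℝ)) ≥
      (T : ℝ) * ∑ p ∈ Finset.univ.filter (fun p : Fin Q × Fin N =>
          1 ≤ (Finset.univ.filter (fun k : Fin K => p.1 ∈ S.W k ∧ p.2 ∉ S.M k)).card ∧
          (∀ k : Fin K, p.2 ∈ S.M k → k ∈ C) ∧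
          (∀ k : Fin K, p.1 ∈ S.W k ∧ p.2 ∉ S.M k → k ∈ C)),
        ((Finset.univ.filter (fun k : Fin K => p.1 ∈ S.W k ∧ p.2 ∉ S.M k)).card : ℝ) /
          (((Finset.univ.filter (fun k : Fin K => p.2 ∈ S.M k)).card : ℝ) +
            ((Finset.univ.filter (fun k : Fin K => p.1 ∈ S.W k ∧ p.2 ∉ S.M k)).card : ℝ)
            - 1) := by
  have hlog : 0 < Real.log 2 := Real.log_pos one_lt_two
  have h := (SubsetBits.condEnt_ge S C).trans (SubsetBits.condEnt_le S C)
  rw [mul_right_comm] at h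
  refine ge_iff_le.2 (le_trans (le_of_eq ?_) (le_of_mul_le_mul_right h hlog))
  congr 1
  -- The condition `1 ≤ d` only drops terms that vanish.
  refine Finset.sum_subset_zero_on_sdiff ?_ ?_ ?_
  · intro p hp
    rw [Finset.mem_filter] at hp
    rw [SubsetBits.mem_compl_known, Finset.union_subset_iff]
    exact ⟨fun k hk => hp.2.2.1 k (by simpa [SubsetBits.havers] using hk),
      fun k hk => hp.2.2.2 k (by simpa [SubsetBits.needers] using hk)⟩
  · intro p hp
    rw [Finset.mem_sdiff, SubsetBits.mem_compl_known, Finset.union_subset_iff] at hp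
    obtain ⟨⟨h1, h2⟩, h3⟩ := hp
    have h0 : (SubsetBits.needers S p).card = 0 := by
      by_contra hne
      refine h3 (Finset.mem_filter.2 ⟨Finset.mem_univ _, Nat.one_le_iff_ne_zero.2 hne,
        fun k hk => h1 (by simpa [SubsetBits.havers] using hk),
        fun k hk => h2 (by simpa [SubsetBits.needers] using hk)⟩)
    simp [SubsetBits.weight, h0]
  · intro p _
    rfl
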